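/- Let p be an odd prime and let r be an element of ZMod p with r ≠ 0 and r ≠ 1. Define f : ZMod p → ZMod p → ZMod p by f(i,j) = j + (i - j) * r⁻¹. Then f is not associative: there exist i, j, k ∈ ZMod p with f(f(i,j), k) ≠ f(i, f(j,k)). Consequently the loop L_{p,r} built from H_{p,r} is not a group. -/

import Mathlib

/-- The entry `H_{p,r}[i,j] = j + (i - j) * r⁻¹` of the array `H_{p,r}`. -/
def Hpr {p : ℕ} (r : ZMod p) (i j : ZMod p) : ZMod p := j + (i - j) * r⁻¹

/-- For an odd prime `p` and `r ∈ ZMod p` with `r ≠ 0`, `r ≠ 1`, the operation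
`f(i,j) = j + (i - j) * r⁻¹` is not associative; hence `L_{p,r}` is not a group. -/
theorem Hpr_not_associative (p : ℕ) (hp : p.Prime) (hodd : p ≠ 2) (r : ZMod p)
    (hr0 : r ≠ 0) (hr1 : r ≠ 1) :
    ∃ i j k : ZMod p, Hpr r (Hpr r i j) k ≠ Hpr r i (Hpr r j k) := by
  haveI : Fact p.Prime := ⟨hp⟩
  refine ⟨1, 0, 0, fun h => ?_⟩
  simp only [Hpr, sub_zero, zero_add, one_mul, zero_mul] at h
  have h0 : r⁻¹ ≠ 0 := inv_ne_zero hr0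
  have h1 : r⁻¹ = 1 := mul_left_cancel₀ h0 (by rw [h, mul_one])
  exact hr1 (inv_eq_one.mp h1)
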